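/- arXiv:2102.06695 — 4 statements merged into one kernel-verified Lean document; each statement's English description precedes it below -/
import Mathlib

section
/- Jensen inequality for the inverse quadratic form (direction of the RFF bias for the data-fit term, Theorem 2, first inequality, finite-mixture form): Let ι be a nonempty finite index set, let (K_i)_{i∈ι} be n×n real symmetric positive definite matrices, let (w_i)_{i∈ι} be nonnegative real weights with Σ_{i∈ι} w_i = 1, and let y ∈ ℝⁿ. Then the averaged matrix Σ_{i∈ι} w_i·K_i is positive definite and yᵀ(Σ_{i∈ι} w_i·K_i)⁻¹ y ≤ Σ_{i∈ι} w_i · yᵀK_i⁻¹y. Hence a random positive definite kernel approximation K̃ with finitely many values and mean E[K̃] = K̂ satisfies E[yᵀK̃⁻¹y] ≥ yᵀK̂⁻¹y, i.e. it overestimates the inverse quadratic term in expectation. -/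
open Matrix Finset

theorem quad_aux {n : ℕ} {A : Matrix (Fin n) (Fin n) ℝ} (hA : A.PosDef) (x y : Fin n → ℝ) :
    2 * (x ⬝ᵥ y) - x ⬝ᵥ A *ᵥ x ≤ y ⬝ᵥ A⁻¹ *ᵥ y := by
  have hdet : IsUnit A.det := (Matrix.isUnit_iff_isUnit_det A).1 hA.isUnit
  have h0 := hA.posSemidef.dotProduct_mulVec_nonneg (A⁻¹ *ᵥ y - x)
  have h1 : A *ᵥ (A⁻¹ *ᵥ y) = y := by
    rw [Matrix.mulVec_mulVec, Matrix.mul_nonsing_inv _ hdet, Matrix.one_mulVec]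
  have hT : Aᵀ = A := by
    have := hA.isHermitian.eq
    rwa [Matrix.conjTranspose_eq_transpose_of_trivial] at this
  have h2 : (A⁻¹ *ᵥ y) ⬝ᵥ A *ᵥ x = x ⬝ᵥ y := by
    rw [Matrix.dotProduct_mulVec, ← Matrix.mulVec_transpose, hT, h1, dotProduct_comm]
  rw [star_trivial, Matrix.mulVec_sub, h1, sub_dotProduct, dotProduct_sub, dotProduct_sub, h2,
    dotProduct_comm (A⁻¹ *ᵥ y) y] at h0
  linarith

/-- Jensen inequality for the inverse quadratic form (direction of the RFF bias for
the data-fit term, finite-mixture form): for positive definite matrices `K i` and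
nonnegative weights `w i` summing to one, the average `∑ i, w i • K i` is positive
definite and `yᵀ(∑ i, w i • K i)⁻¹ y ≤ ∑ i, w i ⬝ yᵀ(K i)⁻¹ y`. -/
theorem jensen_inverse_quadratic_form
    (n : ℕ) (ι : Type*) [Fintype ι] [Nonempty ι]
    (K : ι → Matrix (Fin n) (Fin n) ℝ) (hK : ∀ i, (K i).PosDef)
    (w : ι → ℝ) (hw_nonneg : ∀ i, 0 ≤ w i) (hw_sum : ∑ i, w i = 1)
    (y : Fin n → ℝ) :
    (∑ i, w i • K i).PosDef ∧
    y ⬝ᵥ (∑ i, w i • K i)⁻¹ *ᵥ y ≤ ∑ i, w i * (y ⬝ᵥ (K i)⁻¹ *ᵥ y) := by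
  classical
  have hM : (∑ i, w i • K i).PosDef := by
    obtain ⟨i, -, hi⟩ : ∃ i ∈ (Finset.univ : Finset ι), 0 < w i := by
      apply Finset.exists_lt_of_sum_lt
      simp [hw_sum]
    rw [← Finset.add_sum_erase _ _ (Finset.mem_univ i)]
    exact ((hK i).smul hi).add_posSemidef
      (Matrix.posSemidef_sum _ fun j _ => (hK j).posSemidef.smul (hw_nonneg j))
  refine ⟨hM, ?_⟩
  generalize hMM : ∑ i, w i • K i = M at hM
  have hdet : IsUnit M.det := (Matrix.isUnit_iff_isUnit_det M).1 hM.isUnit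
  obtain ⟨x, hx⟩ : ∃ x, x = M⁻¹ *ᵥ y := ⟨_, rfl⟩
  have h1 : M *ᵥ x = y := by
    rw [hx, Matrix.mulVec_mulVec, Matrix.mul_nonsing_inv _ hdet, Matrix.one_mulVec]
  have h2 : ∑ i, w i * (x ⬝ᵥ K i *ᵥ x) = x ⬝ᵥ y := by
    rw [← h1, ← hMM, Matrix.sum_mulVec, dotProduct_sum]
    simp [Matrix.smul_mulVec]
  have h3 : ∑ i, w i * (2 * (x ⬝ᵥ y) - x ⬝ᵥ K i *ᵥ x) ≤ ∑ i, w i * (y ⬝ᵥ (K i)⁻¹ *ᵥ y) :=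
    Finset.sum_le_sum fun i _ => mul_le_mul_of_nonneg_left (quad_aux (hK i) x y) (hw_nonneg i)
  simp only [mul_sub, Finset.sum_sub_distrib] at h3
  rw [h2, ← Finset.sum_mul, hw_sum] at h3
  rw [← hx, dotProduct_comm]
  linarith
end

section
/- Telescoping bound for the data-fit term under a random-feature update (key estimate in the proof of Theorem 4): Let K be an n×n real symmetric positive semidefinite matrix, let φ, y ∈ ℝⁿ, let σ > 0, and let J ≥ 1 be a natural number. Define K' = (J/(J+1))·K + (1/(J+1))·(φφᵀ). Then both K + σ²·I and K' + σ²·I are positive definite, and yᵀ(K + σ²·I)⁻¹y − yᵀ(K' + σ²·I)⁻¹y ≤ ‖φ‖² · ‖y‖² / (σ⁴ · (J+1)). -/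
open Matrix

/-- Telescoping bound for the data-fit term under a random-feature update: with
`K' = (J/(J+1))⬝K + (1/(J+1))⬝φφᵀ`, both `K + σ²I` and `K' + σ²I` are positive
definite and `yᵀ(K + σ²I)⁻¹y − yᵀ(K' + σ²I)⁻¹y ≤ ‖φ‖²‖y‖² / (σ⁴(J+1))`, where the
squared Euclidean norms are `φ ⬝ᵥ φ` and `y ⬝ᵥ y`. -/
theorem data_fit_telescoping_bound
    (n : ℕ) (K : Matrix (Fin n) (Fin n) ℝ) (hK : K.PosSemidef)
    (φ y : Fin n → ℝ) (σ : ℝ) (hσ : 0 < σ) (J : ℕ) (hJ : 1 ≤ J) :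
    (K + σ ^ 2 • (1 : Matrix (Fin n) (Fin n) ℝ)).PosDef ∧
    (((J : ℝ) / (J + 1)) • K + (1 / ((J : ℝ) + 1)) • vecMulVec φ φ
      + σ ^ 2 • (1 : Matrix (Fin n) (Fin n) ℝ)).PosDef ∧
    y ⬝ᵥ (K + σ ^ 2 • (1 : Matrix (Fin n) (Fin n) ℝ))⁻¹ *ᵥ y
      - y ⬝ᵥ (((J : ℝ) / (J + 1)) • K + (1 / ((J : ℝ) + 1)) • vecMulVec φ φ
          + σ ^ 2 • (1 : Matrix (Fin n) (Fin n) ℝ))⁻¹ *ᵥ y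
      ≤ (φ ⬝ᵥ φ) * (y ⬝ᵥ y) / (σ ^ 4 * ((J : ℝ) + 1)) := by
  have hs : 0 < σ ^ 2 := by positivity
  have hJ1 : (0 : ℝ) < (J : ℝ) + 1 := by positivity
  have h1 : (σ ^ 2 • (1 : Matrix (Fin n) (Fin n) ℝ)).PosDef := PosDef.one.smul hs
  have hA := PosDef.posSemidef_add hK h1
  have hφ : (vecMulVec φ φ).PosSemidef := by
    simpa using posSemidef_vecMulVec_self_star φ
  have hB := PosDef.posSemidef_add
    ((hK.smul (show 0 ≤ (J : ℝ) / (J + 1) by positivity)).add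
      (hφ.smul (show 0 ≤ 1 / ((J : ℝ) + 1) by positivity))) h1
  refine ⟨hA, hB, ?_⟩
  set A := K + σ ^ 2 • (1 : Matrix (Fin n) (Fin n) ℝ) with hAd
  set B := ((J : ℝ) / (J + 1)) • K + (1 / ((J : ℝ) + 1)) • vecMulVec φ φ
      + σ ^ 2 • (1 : Matrix (Fin n) (Fin n) ℝ) with hBd
  have hAu : A *ᵥ (A⁻¹ *ᵥ y) = y := by
    rw [mulVec_mulVec, mul_nonsing_inv _ ((isUnit_iff_isUnit_det _).1 hA.isUnit), one_mulVec]
  have hBw : B *ᵥ (B⁻¹ *ᵥ y) = y := by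
    rw [mulVec_mulVec, mul_nonsing_inv _ ((isUnit_iff_isUnit_det _).1 hB.isUnit), one_mulVec]
  generalize A⁻¹ *ᵥ y = u at *
  generalize B⁻¹ *ᵥ y = w at *
  have hsymm : w ⬝ᵥ B *ᵥ u = u ⬝ᵥ y := by
    have hT : Bᵀ = B := by
      rw [← conjTranspose_eq_transpose_of_trivial]; exact hB.isHermitian
    rw [dotProduct_mulVec, ← mulVec_transpose, hT, hBw, dotProduct_comm]
  have hvar := hB.posSemidef.dotProduct_mulVec_nonneg (w - u)
  simp only [star_trivial, mulVec_sub, dotProduct_sub, sub_dotProduct, hBw, hsymm] at hvar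
  have hKu := hK.dotProduct_mulVec_nonneg u
  simp only [star_trivial] at hKu
  have hBu : u ⬝ᵥ B *ᵥ u = (J : ℝ) / (J + 1) * (u ⬝ᵥ K *ᵥ u)
      + 1 / ((J : ℝ) + 1) * (φ ⬝ᵥ u) ^ 2 + σ ^ 2 * (u ⬝ᵥ u) := by
    simp only [hBd, add_mulVec, smul_mulVec, dotProduct_add, dotProduct_smul, one_mulVec,
      smul_eq_mul, vecMulVec_mulVec, op_smul_eq_smul, dotProduct_comm u φ]
    ring
  have hy : y = K *ᵥ u + σ ^ 2 • u := by
    rw [← hAu]; simp [hAd, add_mulVec, smul_mulVec]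
  have huy : u ⬝ᵥ y = u ⬝ᵥ K *ᵥ u + σ ^ 2 * (u ⬝ᵥ u) := by
    rw [hy]; simp [dotProduct_add]
  have hyy : y ⬝ᵥ y = (K *ᵥ u) ⬝ᵥ (K *ᵥ u) + 2 * σ ^ 2 * (u ⬝ᵥ K *ᵥ u)
      + σ ^ 4 * (u ⬝ᵥ u) := by
    rw [hy]
    simp only [dotProduct_add, add_dotProduct, dotProduct_smul, smul_dotProduct, smul_eq_mul,
      dotProduct_comm (K *ᵥ u) u]
    ring
  have hnn : ∀ v : Fin n → ℝ, 0 ≤ v ⬝ᵥ v := fun v =>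
    Finset.sum_nonneg fun i _ => mul_self_nonneg (v i)
  have hcs : (φ ⬝ᵥ u) ^ 2 ≤ (φ ⬝ᵥ φ) * (u ⬝ᵥ u) := by
    simpa [dotProduct, pow_two] using Finset.sum_mul_sq_le_sq_mul_sq Finset.univ φ u
  have hub : σ ^ 4 * (u ⬝ᵥ u) ≤ y ⬝ᵥ y := by
    have := hnn (K *ᵥ u)
    have := mul_nonneg hs.le hKu
    linarith
  have hstep : y ⬝ᵥ u - y ⬝ᵥ w ≤ (φ ⬝ᵥ u) ^ 2 / ((J : ℝ) + 1) := by
    have e1 : (J : ℝ) / (J + 1) * (u ⬝ᵥ K *ᵥ u) ≤ u ⬝ᵥ K *ᵥ u :=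
      mul_le_of_le_one_left hKu ((div_le_one hJ1).2 (by linarith))
    have e2 : 1 / ((J : ℝ) + 1) * (φ ⬝ᵥ u) ^ 2 = (φ ⬝ᵥ u) ^ 2 / ((J : ℝ) + 1) := by ring
    rw [dotProduct_comm y u, dotProduct_comm y w]
    linarith
  refine hstep.trans ?_
  rw [div_le_div_iff₀ hJ1 (by positivity)]
  have h4 : (0 : ℝ) < σ ^ 4 := by positivity
  have e3 : σ ^ 4 * (φ ⬝ᵥ u) ^ 2 ≤ (φ ⬝ᵥ φ) * (y ⬝ᵥ y) := by
    have := mul_le_mul_of_nonneg_left hcs h4.le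
    have := mul_le_mul_of_nonneg_left hub (hnn φ)
    linarith
  have := mul_le_mul_of_nonneg_right e3 hJ1.le
  linarith
end

section
/- Determinant bound under a random-feature update (matrix-determinant-lemma step in the proof of Theorem 4): Let K be an n×n real symmetric positive semidefinite matrix, let φ ∈ ℝⁿ, let σ > 0, and let J ≥ 1 be a natural number. Define K' = (J/(J+1))·K + (1/(J+1))·(φφᵀ). Then det(K' + σ²·I) ≤ (1 + ‖φ‖² / (σ² · (J+1))) · det(K + σ²·I). -/
open Matrix

lemma det_smul_add_aux (n : ℕ) (K : Matrix (Fin n) (Fin n) ℝ) (hK : K.IsHermitian) (a s : ℝ) :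
    (a • K + s • (1 : Matrix (Fin n) (Fin n) ℝ)).det = ∏ i, (a * hK.eigenvalues i + s) := by
  have h := hK.spectral_theorem
  set U := hK.eigenvectorUnitary
  have hU : (U : Matrix (Fin n) (Fin n) ℝ) * star (U : Matrix (Fin n) (Fin n) ℝ) = 1 := by simp
  have hD : a • K + s • (1 : Matrix (Fin n) (Fin n) ℝ)
      = (U : Matrix (Fin n) (Fin n) ℝ) * diagonal (fun i => a * hK.eigenvalues i + s)
        * star (U : Matrix (Fin n) (Fin n) ℝ) := by
    have : diagonal (fun i => a * hK.eigenvalues i + s)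
        = a • diagonal hK.eigenvalues + s • (1 : Matrix (Fin n) (Fin n) ℝ) := by
      ext i j
      by_cases hij : i = j
      · subst hij; simp
      · simp [hij]
    rw [this, mul_add, add_mul, mul_smul_comm, smul_mul_assoc, mul_smul_comm, smul_mul_assoc,
      mul_one, hU]
    congr 2
  have hdet : (U : Matrix (Fin n) (Fin n) ℝ).det
      * (star (U : Matrix (Fin n) (Fin n) ℝ)).det = 1 := by
    rw [← det_mul, hU, det_one]
  rw [hD, det_mul, det_mul, mul_right_comm, hdet, one_mul, det_diagonal]

/-- Determinant bound under a random-feature update (matrix-determinant-lemma step):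
with `K' = (J/(J+1))⬝K + (1/(J+1))⬝φφᵀ`,
`det(K' + σ²I) ≤ (1 + ‖φ‖² / (σ²(J+1))) ⬝ det(K + σ²I)`, where `‖φ‖² = φ ⬝ᵥ φ`. -/
theorem det_bound_random_feature_update
    (n : ℕ) (K : Matrix (Fin n) (Fin n) ℝ) (hK : K.PosSemidef)
    (φ : Fin n → ℝ) (σ : ℝ) (hσ : 0 < σ) (J : ℕ) (hJ : 1 ≤ J) :
    (((J : ℝ) / (J + 1)) • K + (1 / ((J : ℝ) + 1)) • vecMulVec φ φ
        + σ ^ 2 • (1 : Matrix (Fin n) (Fin n) ℝ)).det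
      ≤ (1 + (φ ⬝ᵥ φ) / (σ ^ 2 * ((J : ℝ) + 1)))
        * (K + σ ^ 2 • (1 : Matrix (Fin n) (Fin n) ℝ)).det := by
  have hs : 0 < σ ^ 2 := by positivity
  have hc : 0 < 1 / ((J : ℝ) + 1) := by positivity
  have ha : 0 ≤ (J : ℝ) / (J + 1) := by positivity
  have ha1 : (J : ℝ) / (J + 1) ≤ 1 := by
    rw [div_le_one (by positivity)]; linarith
  have hr : (φ ⬝ᵥ φ) / (σ ^ 2 * ((J : ℝ) + 1)) = 1 / ((J : ℝ) + 1) * (φ ⬝ᵥ φ / σ ^ 2) := by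
    field_simp
  rw [hr]
  generalize (J : ℝ) / (J + 1) = a at *
  generalize 1 / ((J : ℝ) + 1) = c at *
  generalize σ ^ 2 = s at *
  have hev := hK.eigenvalues_nonneg
  have hM : 0 < (a • K + s • (1 : Matrix (Fin n) (Fin n) ℝ)).det := by
    rw [det_smul_add_aux n K hK.1]
    exact Finset.prod_pos fun i _ => by have := mul_nonneg ha (hev i); linarith
  have hle : (a • K + s • (1 : Matrix (Fin n) (Fin n) ℝ)).det
      ≤ (K + s • (1 : Matrix (Fin n) (Fin n) ℝ)).det := by
    have h1 := det_smul_add_aux n K hK.1 1 s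
    rw [one_smul] at h1
    rw [det_smul_add_aux n K hK.1, h1]
    refine Finset.prod_le_prod (fun i _ => ?_) (fun i _ => ?_)
    · have := mul_nonneg ha (hev i); linarith
    · have := mul_le_mul_of_nonneg_right ha1 (hev i); linarith
  set M := a • K + s • (1 : Matrix (Fin n) (Fin n) ℝ) with hMdef
  have hu : IsUnit M.det := hM.ne'.isUnit
  have hdet : (a • K + c • vecMulVec φ φ + s • (1 : Matrix (Fin n) (Fin n) ℝ)).det
      = M.det * (1 + c * (φ ⬝ᵥ (M⁻¹ *ᵥ φ))) := by
    have h := det_add_replicateCol_mul_replicateRow (ι := Unit) hu (c • φ) φ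
    have e : a • K + c • vecMulVec φ φ + s • (1 : Matrix (Fin n) (Fin n) ℝ)
        = M + replicateCol Unit (c • φ) * replicateRow Unit φ := by
      rw [← vecMulVec_eq, smul_vecMulVec, hMdef]; abel
    rw [e, h]
    congr 1
    rw [det_unique, Matrix.mul_assoc, ← replicateCol_mulVec, mulVec_smul]
    simp [Matrix.mul_apply, dotProduct, Finset.mul_sum, mul_left_comm]
  have hy : M *ᵥ (M⁻¹ *ᵥ φ) = φ := by
    rw [mulVec_mulVec, mul_nonsing_inv _ hu, one_mulVec]
  rw [hdet]
  generalize M⁻¹ *ᵥ φ = y at *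
  have hKy : 0 ≤ y ⬝ᵥ (K *ᵥ y) := by simpa using hK.dotProduct_mulVec_nonneg y
  have h1 : φ ⬝ᵥ y = a * (y ⬝ᵥ (K *ᵥ y)) + s * (y ⬝ᵥ y) := by
    rw [dotProduct_comm]
    conv_lhs => rw [← hy]
    simp [hMdef, add_mulVec, smul_mulVec, dotProduct_add, dotProduct_smul]
  have h2 : 0 ≤ (φ - s • y) ⬝ᵥ (φ - s • y) :=
    Finset.sum_nonneg fun i _ => mul_self_nonneg _
  have h3 : (φ - s • y) ⬝ᵥ (φ - s • y)
      = φ ⬝ᵥ φ - 2 * s * (φ ⬝ᵥ y) + s * (s * (y ⬝ᵥ y)) := by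
    simp only [sub_dotProduct, dotProduct_sub, smul_dotProduct, dotProduct_smul, smul_eq_mul,
      dotProduct_comm y φ]
    ring
  have h4 : s * (s * (y ⬝ᵥ y)) ≤ s * (φ ⬝ᵥ y) :=
    mul_le_mul_of_nonneg_left (by have := mul_nonneg ha hKy; linarith) hs.le
  have h5 : φ ⬝ᵥ y ≤ φ ⬝ᵥ φ / s := by
    rw [le_div_iff₀ hs]; linarith
  have h6 : 0 ≤ φ ⬝ᵥ φ / s := div_nonneg (Finset.sum_nonneg fun i _ => mul_self_nonneg _) hs.le
  have h7 := mul_nonneg hc.le h6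
  have h8 := mul_le_mul_of_nonneg_left h5 hc.le
  calc M.det * (1 + c * (φ ⬝ᵥ y)) ≤ M.det * (1 + c * (φ ⬝ᵥ φ / s)) :=
        mul_le_mul_of_nonneg_left (by linarith) hM.le
    _ = (1 + c * (φ ⬝ᵥ φ / s)) * M.det := mul_comm _ _
    _ ≤ _ := mul_le_mul_of_nonneg_left hle (by linarith)
end

section
/- Telescoping bound for the log-determinant term under a random-feature update (key estimate in the proof of Theorem 4): Let K be an n×n real symmetric positive semidefinite matrix, let φ ∈ ℝⁿ, let σ > 0, and let J ≥ 1 be a natural number. Define K' = (J/(J+1))·K + (1/(J+1))·(φφᵀ). Then log det(K' + σ²·I) − log det(K + σ²·I) ≤ log(1 + ‖φ‖² / (σ² · (J+1))) ≤ ‖φ‖² / (σ² · (J+1)). -/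
open Matrix

lemma aux_det {n : ℕ} {K : Matrix (Fin n) (Fin n) ℝ} (hK : K.PosSemidef) (c s : ℝ) (hc : 0 < c) :
    (c • K + s • (1 : Matrix (Fin n) (Fin n) ℝ)).det
      = ∏ i, (c * hK.isHermitian.eigenvalues i + s) := by
  have h := congrArg (Polynomial.eval (-(s / c))) hK.isHermitian.charpoly_eq
  rw [Matrix.eval_charpoly, Polynomial.eval_prod] at h
  have e : c • K + s • (1 : Matrix (Fin n) (Fin n) ℝ)
      = (-c) • (Matrix.scalar (Fin n) (-(s / c)) - K) := by
    ext i j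
    by_cases hij : i = j
    · subst hij
      simp
      field_simp
      ring
    · simp [hij]
  rw [e, det_smul, h, ← Finset.card_univ, ← Finset.prod_const, ← Finset.prod_mul_distrib]
  refine Finset.prod_congr rfl fun i _ => ?_
  simp
  field_simp
  ring

lemma aux_quad {n : ℕ} {K : Matrix (Fin n) (Fin n) ℝ} (hK : K.PosSemidef) (c s : ℝ)
    (hc : 0 < c) (hs : 0 < s) (y : Fin n → ℝ) :
    s * (((c • K + s • (1 : Matrix (Fin n) (Fin n) ℝ)) *ᵥ y) ⬝ᵥ y) ≤
     ((c • K + s • (1 : Matrix (Fin n) (Fin n) ℝ)) *ᵥ y) ⬝ᵥ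
      ((c • K + s • (1 : Matrix (Fin n) (Fin n) ℝ)) *ᵥ y) := by
  have h1 : 0 ≤ y ⬝ᵥ (K *ᵥ y) := by simpa using hK.dotProduct_mulVec_nonneg y
  have h2 : 0 ≤ (K *ᵥ y) ⬝ᵥ (K *ᵥ y) := by
    simpa using dotProduct_star_self_nonneg (K *ᵥ y)
  simp only [add_mulVec, smul_mulVec, one_mulVec, add_dotProduct, dotProduct_add, smul_dotProduct,
    dotProduct_smul, smul_eq_mul]
  rw [dotProduct_comm (K *ᵥ y) y]
  have h3 := mul_nonneg (mul_nonneg hc.le hs.le) h1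
  have h4 := mul_nonneg (mul_nonneg hc.le hc.le) h2
  nlinarith

lemma aux_nonneg {n : ℕ} {K : Matrix (Fin n) (Fin n) ℝ} (hK : K.PosSemidef) (c s : ℝ)
    (hc : 0 < c) (hs : 0 < s) (y : Fin n → ℝ) :
    0 ≤ ((c • K + s • (1 : Matrix (Fin n) (Fin n) ℝ)) *ᵥ y) ⬝ᵥ y := by
  have h1 : 0 ≤ y ⬝ᵥ (K *ᵥ y) := by simpa using hK.dotProduct_mulVec_nonneg y
  have h2 : 0 ≤ y ⬝ᵥ y := by simpa using dotProduct_star_self_nonneg y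
  simp only [add_mulVec, smul_mulVec, one_mulVec, add_dotProduct, smul_dotProduct, smul_eq_mul]
  rw [dotProduct_comm (K *ᵥ y) y]
  positivity

/-- Telescoping bound for the log-determinant term under a random-feature update:
with `K' = (J/(J+1))⬝K + (1/(J+1))⬝φφᵀ`,
`log det(K' + σ²I) − log det(K + σ²I) ≤ log(1 + ‖φ‖²/(σ²(J+1))) ≤ ‖φ‖²/(σ²(J+1))`,
where `‖φ‖² = φ ⬝ᵥ φ`. -/
theorem log_det_telescoping_bound
    (n : ℕ) (K : Matrix (Fin n) (Fin n) ℝ) (hK : K.PosSemidef)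
    (φ : Fin n → ℝ) (σ : ℝ) (hσ : 0 < σ) (J : ℕ) (hJ : 1 ≤ J) :
    Real.log (((J : ℝ) / (J + 1)) • K + (1 / ((J : ℝ) + 1)) • vecMulVec φ φ
          + σ ^ 2 • (1 : Matrix (Fin n) (Fin n) ℝ)).det
        - Real.log (K + σ ^ 2 • (1 : Matrix (Fin n) (Fin n) ℝ)).det
      ≤ Real.log (1 + (φ ⬝ᵥ φ) / (σ ^ 2 * ((J : ℝ) + 1))) ∧
    Real.log (1 + (φ ⬝ᵥ φ) / (σ ^ 2 * ((J : ℝ) + 1)))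
      ≤ (φ ⬝ᵥ φ) / (σ ^ 2 * ((J : ℝ) + 1)) := by
  have hφ : 0 ≤ φ ⬝ᵥ φ := by simpa using dotProduct_star_self_nonneg φ
  have hJ' : (0 : ℝ) < J := by exact_mod_cast hJ
  have hs : 0 < σ ^ 2 := by positivity
  have hx : 0 ≤ (φ ⬝ᵥ φ) / (σ ^ 2 * ((J : ℝ) + 1)) := by positivity
  refine ⟨?_, by have := Real.log_le_sub_one_of_pos
                    (show 0 < 1 + (φ ⬝ᵥ φ) / (σ ^ 2 * ((J : ℝ) + 1)) by positivity)
                 linarith⟩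
  generalize σ ^ 2 = s at *
  have hc : 0 < (J : ℝ) / (J + 1) := by positivity
  have hc1 : (J : ℝ) / (J + 1) ≤ 1 := by rw [div_le_one (by positivity)]; linarith
  have ha : 0 < 1 / ((J : ℝ) + 1) := by positivity
  have hxe : (φ ⬝ᵥ φ) / (s * ((J : ℝ) + 1)) = 1 / ((J : ℝ) + 1) * ((φ ⬝ᵥ φ) / s) := by
    field_simp
  rw [hxe] at hx ⊢
  generalize (J : ℝ) / (J + 1) = c at *
  generalize 1 / ((J : ℝ) + 1) = a at *
  have hev := hK.eigenvalues_nonneg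
  have hdM := aux_det hK c s hc
  have hdK := aux_det hK 1 s one_pos
  rw [one_smul] at hdK
  have hMpos : 0 < (c • K + s • (1 : Matrix (Fin n) (Fin n) ℝ)).det := by
    rw [hdM]
    exact Finset.prod_pos fun i _ => by have := mul_nonneg hc.le (hev i); linarith
  have hle : (c • K + s • (1 : Matrix (Fin n) (Fin n) ℝ)).det
      ≤ (K + s • (1 : Matrix (Fin n) (Fin n) ℝ)).det := by
    rw [hdM, hdK]
    refine Finset.prod_le_prod (fun i _ => ?_) fun i _ => ?_
    · have := mul_nonneg hc.le (hev i); linarith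
    · have := mul_le_mul_of_nonneg_right hc1 (hev i); linarith
  have hKpos := hMpos.trans_le hle
  have hq := aux_quad hK c s hc hs ((c • K + s • (1 : Matrix (Fin n) (Fin n) ℝ))⁻¹ *ᵥ φ)
  have hq0 := aux_nonneg hK c s hc hs ((c • K + s • (1 : Matrix (Fin n) (Fin n) ℝ))⁻¹ *ᵥ φ)
  have hMM : c • K + a • vecMulVec φ φ + s • (1 : Matrix (Fin n) (Fin n) ℝ)
    = (c • K + s • (1 : Matrix (Fin n) (Fin n) ℝ)) + a • vecMulVec φ φ := by abel
  rw [hMM]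
  generalize c • K + s • (1 : Matrix (Fin n) (Fin n) ℝ) = M at *
  have hu : IsUnit M.det := hMpos.ne'.isUnit
  rw [mulVec_mulVec, mul_nonsing_inv _ hu, one_mulVec] at hq hq0
  have hdet : (M + a • vecMulVec φ φ).det = M.det * (1 + a * (φ ⬝ᵥ (M⁻¹ *ᵥ φ))) := by
    rw [← smul_vecMulVec, vecMulVec_eq Unit, det_add_replicateCol_mul_replicateRow hu]
    congr 1
    rw [Matrix.mul_assoc, ← replicateCol_mulVec, det_unique]
    simp [mulVec_smul, replicateRow_mul_replicateCol_apply]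
  have hle2 : (M + a • vecMulVec φ φ).det ≤
      (1 + a * (φ ⬝ᵥ φ / s)) * (K + s • (1 : Matrix (Fin n) (Fin n) ℝ)).det := by
    have : φ ⬝ᵥ (M⁻¹ *ᵥ φ) ≤ φ ⬝ᵥ φ / s := by
      rw [le_div_iff₀ hs]; linarith
    have h5 := mul_le_mul_of_nonneg_left this ha.le
    rw [hdet]
    calc _ ≤ M.det * (1 + a * (φ ⬝ᵥ φ / s)) := by gcongr
      _ ≤ _ := by rw [mul_comm]; gcongr
  have hp : 0 < (M + a • vecMulVec φ φ).det := by
    rw [hdet]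
    positivity
  have := Real.log_le_log hp hle2
  rw [Real.log_mul (by positivity) hKpos.ne'] at this
  linarith
end
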